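/- For Lebesgue-almost every ω ∈ [0,1], there are infinitely many positive integers n such that ∑_{m=1}^{n} |S_m(ω)|² ≥ 2·n²; that is, the set of ω ∈ [0,1] for which {n ∈ ℕ : ∑_{m=1}^{n} |S_m(ω)|² ≥ 2n²} is infinite has full Lebesgue measure in [0,1]. -/

import Mathlib

open MeasureTheory Real

/-- The quadratic Weyl sum `S_m(ω) = ∑_{j=1}^m exp(2πiω(j²-j))`. -/
noncomputable def S (ω : ℝ) (m : ℕ) : ℂ :=
  ∑ j ∈ Finset.Icc 1 m,
    Complex.exp (2 * (Real.pi : ℂ) * Complex.I * (ω : ℂ) * ((j : ℂ) ^ 2 - (j : ℂ)))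

/-- The general term. -/
noncomputable def wE (ω : ℝ) (j : ℕ) : ℂ :=
  Complex.exp (2 * (Real.pi : ℂ) * Complex.I * (ω : ℂ) * ((j : ℂ) ^ 2 - (j : ℂ)))

lemma S_succ (ω : ℝ) (m : ℕ) : S ω (m + 1) - S ω m = wE ω (m + 1) := by
  unfold S wE
  rw [Finset.sum_Icc_succ_top (by omega)]
  simp

lemma norm_wE (ω : ℝ) (j : ℕ) : ‖wE ω j‖ = 1 := by
  unfold wE
  have : 2 * (Real.pi : ℂ) * Complex.I * (ω : ℂ) * ((j : ℂ) ^ 2 - (j : ℂ))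
      = ((2 * Real.pi * ω * ((j : ℝ) ^ 2 - j) : ℝ) : ℂ) * Complex.I := by
    push_cast; ring
  rw [this, Complex.norm_exp_ofReal_mul_I]

lemma wE_mul (a b : ℝ) (j : ℕ) : wE a j * wE b j = wE (a + b) j := by
  unfold wE
  rw [← Complex.exp_add]; congr 1; push_cast; ring

lemma wE_diff (b : ℝ) (j : ℕ) : ‖wE b (j + 1) - wE b j‖ ≤ 4 * Real.pi * |b| * j := by
  have h : wE b (j + 1) = wE b j * Complex.exp (Complex.I * ((4 * Real.pi * b * j : ℝ) : ℂ)) := by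
    unfold wE
    rw [← Complex.exp_add]; congr 1; push_cast; ring
  have h2 : wE b (j + 1) - wE b j
      = wE b j * (Complex.exp (Complex.I * ((4 * Real.pi * b * j : ℝ) : ℂ)) - 1) := by
    rw [h]; ring
  rw [h2, norm_mul, norm_wE, one_mul]
  refine (Real.norm_exp_I_mul_ofReal_sub_one_le).trans (le_of_eq ?_)
  rw [Real.norm_eq_abs, abs_mul, abs_mul, abs_mul, abs_of_pos Real.pi_pos]
  simp

lemma abel_bound (T u : ℕ → ℂ) (κ : ℝ) (n m H : ℕ) (hu : ∀ j, ‖u j‖ = 1)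
    (hd : ∀ j < n, ‖u (j + 1) - u j‖ ≤ κ) (hmn : m + H ≤ n) :
    ‖∑ i ∈ Finset.range H, (T (m + i + 1) - T (m + i)) * u (m + i + 1)‖
      ≤ ‖T m‖ + ‖T (m + H)‖ + κ * ∑ j ∈ Finset.range n, ‖T j‖ := by
  have key : ∑ i ∈ Finset.range H, (T (m + i + 1) - T (m + i)) * u (m + i + 1)
      = T (m + H) * u (m + H) - T m * u m
        - ∑ i ∈ Finset.range H, T (m + i) * (u (m + i + 1) - u (m + i)) := by
    clear hmn
    induction H with
    | zero => simp
    | succ k ih =>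
      rw [Finset.sum_range_succ, ih, Finset.sum_range_succ]
      rw [show m + (k + 1) = m + k + 1 by ring]
      ring
  have e1 : ‖∑ i ∈ Finset.range H, T (m + i) * (u (m + i + 1) - u (m + i))‖
      ≤ κ * ∑ j ∈ Finset.range n, ‖T j‖ := by
    calc _ ≤ ∑ i ∈ Finset.range H, ‖T (m + i) * (u (m + i + 1) - u (m + i))‖ := norm_sum_le _ _
      _ ≤ ∑ i ∈ Finset.range H, κ * ‖T (m + i)‖ := by
        refine Finset.sum_le_sum fun i hi => ?_
        have := Finset.mem_range.1 hi
        rw [norm_mul, mul_comm]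
        exact mul_le_mul_of_nonneg_right (hd _ (by omega)) (norm_nonneg _)
      _ = ∑ j ∈ Finset.Ico m (m + H), κ * ‖T j‖ := by
        rw [Finset.sum_Ico_eq_sum_range]; simp
      _ ≤ ∑ j ∈ Finset.range n, κ * ‖T j‖ := by
        refine Finset.sum_le_sum_of_subset_of_nonneg ?_ ?_
        · intro j hj
          simp only [Finset.mem_Ico, Finset.mem_range] at *
          omega
        · intro j hj _
          exact mul_nonneg ((norm_nonneg _).trans (hd j (Finset.mem_range.1 hj))) (norm_nonneg _)
      _ = _ := by rw [Finset.mul_sum]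
  rw [key]
  refine (norm_sub_le _ _).trans (add_le_add ((norm_sub_le _ _).trans ?_) e1)
  rw [norm_mul, norm_mul, hu, hu]
  linarith

lemma gauss_zmod (q : ℕ) [NeZero q] (p : ℤ) (hq : Odd q) (hp : IsCoprime p (q : ℤ)) :
    ‖∑ x : ZMod q, ZMod.stdAddChar ((p : ZMod q) * (x ^ 2 - x))‖ ^ 2 = q := by
  set ψ : AddChar (ZMod q) ℂ := ZMod.stdAddChar with hψ
  have hu : IsUnit ((2 * p : ZMod q)) := by
    refine IsUnit.mul ?_ ?_
    · have : IsUnit ((2 : ℕ) : ZMod q) := by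
        rw [ZMod.isUnit_iff_coprime]
        exact (Nat.coprime_two_left).2 hq
      simpa using this
    · obtain ⟨a, b, hab⟩ := hp
      have := congrArg (Int.cast : ℤ → ZMod q) hab
      push_cast at this
      simp at this
      exact IsUnit.of_mul_eq_one_right _ this
  have hc : ((‖∑ x : ZMod q, ψ ((p : ZMod q) * (x ^ 2 - x))‖ ^ 2 : ℝ) : ℂ) = q := by
    push_cast
    rw [← Complex.mul_conj', map_sum, Finset.sum_mul_sum]
    have h1 : ∀ y : ZMod q, ∑ x : ZMod q, ψ ((p : ZMod q) * (x ^ 2 - x))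
        * (starRingEnd ℂ) (ψ ((p : ZMod q) * (y ^ 2 - y)))
        = ∑ d : ZMod q, ψ (p * (d ^ 2 - d)) * ψ (y * (2 * p * d)) := by
      intro y
      rw [← Equiv.sum_comp (Equiv.addRight y)]
      refine Finset.sum_congr rfl fun d _ => ?_
      rw [← AddChar.map_neg_eq_conj, ← AddChar.map_add_eq_mul, ← AddChar.map_add_eq_mul]
      congr 1
      simp only [Equiv.coe_addRight]
      ring
    rw [Finset.sum_comm]
    simp_rw [h1]
    rw [Finset.sum_comm]
    have h2 : ∀ b : ZMod q, ∑ y : ZMod q, ψ (y * b) = if b = 0 then (Fintype.card (ZMod q) : ℂ) else 0 := by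
      intro b
      rw [AddChar.sum_mulShift b (ZMod.isPrimitive_stdAddChar q)]
      split_ifs <;> simp
    simp_rw [← Finset.mul_sum, h2]
    simp only [hu.mul_right_eq_zero]
    simp
  exact_mod_cast hc

lemma periodic_shift (h : ℕ → ℂ) (q : ℕ) (hh : ∀ j, h (j + q) = h j) (m : ℕ) :
    ∑ i ∈ Finset.range q, h (m + i) = ∑ i ∈ Finset.range q, h i := by
  induction m with
  | zero => simp
  | succ k ih =>
    rw [← ih]
    have a := Finset.sum_range_succ (fun i => h (k + i)) q
    have b := Finset.sum_range_succ' (fun i => h (k + i)) q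
    rw [a] at b
    simp only [hh, add_zero] at b
    have := add_right_cancel b
    rw [this]
    refine Finset.sum_congr rfl fun i _ => ?_
    congr 1; ring

lemma periodic_block (h : ℕ → ℂ) (q : ℕ) (hh : ∀ j, h (j + q) = h j) (m L : ℕ) :
    ∑ i ∈ Finset.range (L * q), h (m + i) = L * ∑ i ∈ Finset.range q, h i := by
  induction L with
  | zero => simp
  | succ k ih =>
    rw [Nat.succ_mul, Finset.sum_range_add, ih]
    simp_rw [← add_assoc]
    rw [periodic_shift h q hh]
    push_cast; ring

lemma wE_rat (q : ℕ) [NeZero q] (p : ℤ) (j : ℕ) :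
    wE ((p : ℝ) / q) j = ZMod.stdAddChar ((p : ZMod q) * ((j : ZMod q) ^ 2 - (j : ZMod q))) := by
  have : ((p : ZMod q) * ((j : ZMod q) ^ 2 - (j : ZMod q))) = ((p * ((j : ℤ) ^ 2 - j) : ℤ) : ZMod q) := by
    push_cast; ring
  rw [this, ZMod.stdAddChar_coe]
  unfold wE
  congr 1; push_cast; ring

lemma gauss_block (q : ℕ) (p : ℤ) (hq : Odd q) (hp : IsCoprime p (q : ℤ)) (m L : ℕ) :
    ‖∑ i ∈ Finset.range (L * q), wE ((p : ℝ) / q) (m + i + 1)‖ = L * √q := by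
  have : NeZero q := ⟨by rintro rfl; simp at hq⟩
  have hper : ∀ j, wE ((p : ℝ) / q) (j + q) = wE ((p : ℝ) / q) j := by
    intro j; rw [wE_rat, wE_rat]; simp
  have := periodic_block _ q hper (m + 1) L
  simp_rw [show ∀ i, m + i + 1 = m + 1 + i by intro i; ring]
  rw [this, norm_mul, Complex.norm_natCast]
  congr 1
  have hg := congrArg Real.sqrt (gauss_zmod q p hq hp)
  rw [Real.sqrt_sq (norm_nonneg _)] at hg
  rw [← hg]
  congr 1
  clear hg this
  simp_rw [wE_rat]
  obtain ⟨k, rfl⟩ : ∃ k, q = k + 1 := ⟨q - 1, by have := NeZero.ne q; omega⟩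
  rw [Finset.sum_range]
  refine Finset.sum_congr rfl fun i _ => ?_
  have : ((i : ℕ) : ZMod (k + 1)) = i := Fin.cast_val_eq_self i
  rw [this]

lemma main_est (ω : ℝ) (q : ℕ) (p : ℤ) (hq : Odd q) (hp : IsCoprime p (q : ℤ))
    (hω : |ω - p / q| ≤ 1 / 1000000 / (q : ℝ) ^ 2) :
    2 * ((128 * q : ℕ) : ℝ) ^ 2 ≤ ∑ m ∈ Finset.Icc 1 (128 * q), ‖S ω m‖ ^ 2 := by
  by_contra hcon
  push Not at hcon
  have hq0 : 0 < q := hq.pos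
  have hqR : (0 : ℝ) < q := by exact_mod_cast hq0
  set n := 128 * q with hn
  set A := ∑ m ∈ Finset.Icc 1 n, ‖S ω m‖ ^ 2 with hA
  set X := ∑ j ∈ Finset.range n, ‖S ω j‖ with hX
  set β := (p : ℝ) / q - ω with hβ
  have hX0 : 0 ≤ X := Finset.sum_nonneg fun _ _ => norm_nonneg _
  have hnR : (n : ℝ) = 128 * q := by rw [hn]; push_cast; ring
  have hS0 : S ω 0 = 0 := by simp [S]
  have hXA : X ^ 2 ≤ n * A := by
    have h1 := sq_sum_le_card_mul_sum_sq (s := Finset.range n) (f := fun j => ‖S ω j‖)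
    rw [Finset.card_range] at h1
    refine h1.trans (mul_le_mul_of_nonneg_left ?_ (Nat.cast_nonneg _))
    have h2 : ∑ j ∈ Finset.range n, ‖S ω j‖ ^ 2 ≤ ∑ j ∈ Finset.range (n + 1), ‖S ω j‖ ^ 2 :=
      Finset.sum_le_sum_of_subset_of_nonneg (Finset.range_mono (by omega))
        fun _ _ _ => by positivity
    refine h2.trans (le_of_eq ?_)
    rw [Finset.sum_range_succ', hS0, hA, Finset.range_eq_Ico, Finset.sum_Ico_add' (fun j => ‖S ω j‖ ^ 2)]
    simp
    rfl
  set κ : ℝ := 4 * Real.pi * |β| * n with hκ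
  have hκ0 : 0 ≤ κ := by positivity
  have hκle : κ ≤ 2000 / 1000000 / q := by
    have h1 : |β| ≤ 1 / 1000000 / (q : ℝ) ^ 2 := by rw [hβ, abs_sub_comm]; exact hω
    calc κ ≤ 4 * 3.15 * (1 / 1000000 / (q : ℝ) ^ 2) * n := by
          rw [hκ]; gcongr; exact Real.pi_lt_d2.le
      _ = 1612.8 / 1000000 / q := by rw [hnR]; field_simp; norm_num
      _ ≤ _ := by gcongr; norm_num
  have hs := Real.sq_sqrt hqR.le
  have hs0 := Real.sqrt_nonneg (q : ℝ)
  have hX2 : X ≤ 2048 * (q * √q) := by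
    refine abs_le_of_sq_le_sq' ?_ (by positivity) |>.2
    calc X ^ 2 ≤ n * A := hXA
      _ ≤ n * (2 * (n : ℝ) ^ 2) := by gcongr
      _ = (2048 * (q * √q)) ^ 2 := by rw [mul_pow, mul_pow, hs, hnR]; ring
  have hκX : κ * X ≤ 32 * √q := by
    calc κ * X ≤ (2000 / 1000000 / q) * (2048 * (q * √q)) := by gcongr
      _ = 4.096 * √q := by field_simp; norm_num
      _ ≤ _ := by gcongr; norm_num
  have hm : ∀ m ∈ Finset.Icc 1 (64 * q), 512 * (q : ℝ) ≤ ‖S ω m‖ ^ 2 + ‖S ω (m + 64 * q)‖ ^ 2 := by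
    intro m hm
    have hm' := Finset.mem_Icc.1 hm
    have h1 := abel_bound (S ω) (wE β) κ n m (64 * q) (norm_wE β) (by
      intro j hj
      refine (wE_diff β j).trans ?_
      rw [hκ]; gcongr) (by omega)
    simp_rw [S_succ, wE_mul] at h1
    rw [show ω + β = (p : ℝ) / q by rw [hβ]; ring, gauss_block q p hq hp] at h1
    push_cast at h1
    have h2 : 32 * √q ≤ ‖S ω m‖ + ‖S ω (m + 64 * q)‖ := by linarith
    have h3 := pow_le_pow_left₀ (by positivity) h2 2
    rw [mul_pow, hs] at h3
    nlinarith [sq_nonneg (‖S ω m‖ - ‖S ω (m + 64 * q)‖)]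
  have hsum := Finset.sum_le_sum hm
  rw [Finset.sum_const, Nat.card_Icc, Finset.sum_add_distrib] at hsum
  have hsplit : ∑ m ∈ Finset.Icc 1 (64 * q), ‖S ω m‖ ^ 2
      + ∑ m ∈ Finset.Icc 1 (64 * q), ‖S ω (m + 64 * q)‖ ^ 2 = A := by
    have := Finset.sum_Ico_add' (fun j => ‖S ω j‖ ^ 2) 1 (64 * q + 1) (64 * q)
    have e : ∀ k, Finset.Icc 1 k = Finset.Ico 1 (k + 1) := fun k => rfl
    rw [hA, e, e, this, ← Finset.sum_Ico_consecutive (fun j => ‖S ω j‖ ^ 2)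
      (show 1 ≤ 64 * q + 1 by omega) (show 64 * q + 1 ≤ n + 1 by omega)]
    congr 2
    congr 1 <;> omega
  rw [hsplit] at hsum
  simp only [Nat.add_sub_cancel, nsmul_eq_mul] at hsum
  push_cast at hsum
  rw [hnR] at hcon
  nlinarith

/-- reduced fractions -/
def fr (q : ℕ) : Set ℝ := {x | ∃ p : ℤ, IsCoprime p (q : ℤ) ∧ x = p / q}

lemma odd_approx (ξ : ℚ) (ω : ℝ) (h : |ω - ξ| < 1 / (ξ.den : ℝ) ^ 2) :
    ∃ s : ℕ, ∃ r : ℤ, ξ.den ≤ s ∧ Odd s ∧ IsCoprime r (s : ℤ) ∧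
      |ω - r / s| ≤ 6 / (s : ℝ) ^ 2 := by
  obtain ⟨q, hq⟩ : ∃ q, q = ξ.den := ⟨_, rfl⟩
  obtain ⟨p, hp⟩ : ∃ p, p = ξ.num := ⟨_, rfl⟩
  have hq0 : 0 < q := hq ▸ ξ.den_pos
  have hqR : (0 : ℝ) < q := by exact_mod_cast hq0
  have hcop : IsCoprime p (q : ℤ) := by
    rw [hp, hq, Int.isCoprime_iff_gcd_eq_one]; exact ξ.reduced
  have hξ : (ξ : ℝ) = p / q := by rw [hp, hq]; exact Rat.cast_def ξ
  rw [hξ, ← hq] at h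
  rw [← hq]
  rcases Nat.even_or_odd q with he | ho
  · obtain ⟨a, b, hab⟩ := hcop
    -- a p + b q = 1
    have hqz : (0 : ℤ) < q := by exact_mod_cast hq0
    set s₀ : ℤ := a % q + q with hs₀
    have hm1 := Int.emod_nonneg a hqz.ne'
    have hm2 := Int.emod_lt_of_pos a hqz
    have hdiv := Int.emod_add_mul_ediv a q
    obtain ⟨s, hs⟩ := Int.eq_ofNat_of_zero_le (show 0 ≤ s₀ by omega)
    obtain ⟨c, hc⟩ : ∃ c : ℤ, s₀ = a + c * q := ⟨1 - a / q, by rw [hs₀]; linear_combination hdiv⟩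
    -- s₀ p - r q = 1
    have hr : s₀ * p - (c * p - b) * q = 1 := by rw [hc]; linear_combination hab
    rw [hs] at hr
    have hsq : q ≤ s := by omega
    have hs2 : s ≤ 2 * q := by omega
    have hsR : (q : ℝ) ≤ s := by exact_mod_cast hsq
    have hsR2 : (s : ℝ) ≤ 2 * q := by exact_mod_cast hs2
    have hspos : (0 : ℝ) < s := by linarith
    refine ⟨s, c * p - b, hsq, ?_, ⟨-q, p, by linear_combination hr⟩, ?_⟩
    · by_contra hns
      rw [Nat.not_odd_iff_even] at hns
      obtain ⟨x, hx⟩ := he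
      obtain ⟨y, hy⟩ := hns
      rw [hx, hy] at hr
      push_cast at hr
      have : 2 * (y * p - (c * p - b) * x) = 1 := by linear_combination hr
      omega
    · set r := c * p - b
      have hrR : (s : ℝ) * p - r * q = 1 := by exact_mod_cast hr
      have e : (p : ℝ) / q - r / s = 1 / (q * s) := by
        field_simp; linear_combination hrR
      have h1 : |ω - r / s| ≤ 1 / (q : ℝ) ^ 2 + 1 / (q * s) := by
        have : ω - r / s = (ω - p / q) + (p / q - r / s) := by ring
        rw [this]
        refine (abs_add_le _ _).trans (add_le_add h.le ?_)
        rw [e, abs_of_pos (by positivity)]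
      refine h1.trans ?_
      have i1 : 1 / (q : ℝ) ^ 2 ≤ 4 / (s : ℝ) ^ 2 := by
        rw [div_le_div_iff₀ (by positivity) (by positivity)]; nlinarith
      have i2 : 1 / ((q : ℝ) * s) ≤ 2 / (s : ℝ) ^ 2 := by
        rw [div_le_div_iff₀ (by positivity) (by positivity)]; nlinarith
      calc _ ≤ 4 / (s : ℝ) ^ 2 + 2 / (s : ℝ) ^ 2 := add_le_add i1 i2
        _ = _ := by ring
  · refine ⟨q, p, le_rfl, ho, hcop, h.le.trans ?_⟩
    gcongr; norm_num

lemma den_unbounded (ω : ℝ) (hω : Irrational ω) (N : ℕ) :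
    ∃ ξ : ℚ, |ω - ξ| < 1 / (ξ.den : ℝ) ^ 2 ∧ N < ξ.den := by
  by_contra hcon
  push Not at hcon
  refine Real.infinite_rat_abs_sub_lt_one_div_den_sq_of_irrational hω ?_
  have hfin : ((Set.Icc (-((|ω| + 1) * N)) ((|ω| + 1) * N) ∩ Set.range ((↑) : ℤ → ℝ))).Finite := by
    have : (Set.Icc ⌈(-((|ω| + 1) * N) : ℝ)⌉ ⌊(|ω| + 1) * N⌋).Finite := Set.finite_Icc _ _
    refine (this.image ((↑) : ℤ → ℝ)).subset ?_
    rintro _ ⟨⟨h1, h2⟩, z, rfl⟩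
    exact ⟨z, ⟨Int.ceil_le.2 h1, Int.le_floor.2 h2⟩, rfl⟩
  have hfin2 := hfin.prod (Set.finite_Iic N)
  refine Set.Finite.of_finite_image (f := fun ξ : ℚ => ((ξ.num : ℝ), ξ.den)) (hfin2.subset ?_) ?_
  · rintro _ ⟨ξ, hξ, rfl⟩
    have hN := hcon ξ hξ
    refine ⟨⟨?_, ⟨_, rfl⟩⟩, hN⟩
    have hd : (1 : ℝ) ≤ ξ.den := by exact_mod_cast ξ.den_pos
    have h1 : |ω - ξ| < 1 := lt_of_lt_of_le hξ (by
      rw [div_le_one (by positivity)]; nlinarith)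
    have h2 : |(ξ : ℝ)| ≤ |ω| + 1 := by
      have := abs_sub_abs_le_abs_sub (ξ : ℝ) ω
      rw [abs_sub_comm] at this
      linarith
    have h3 : (ξ.num : ℝ) = ξ * ξ.den := by exact_mod_cast (Rat.mul_den_eq_num ξ).symm
    have hN' : (ξ.den : ℝ) ≤ N := by exact_mod_cast hN
    show (ξ.num : ℝ) ∈ _
    rw [Set.mem_Icc, ← abs_le, h3, abs_mul, Nat.abs_cast]
    gcongr
  · intro a _ b _ hab
    simp only [Prod.mk.injEq, Int.cast_inj] at hab
    exact Rat.ext hab.1 hab.2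

/-- For Lebesgue almost-every `ω ∈ [0,1]` there are infinitely many `n` with
`∑_{m=1}^{n} |S_m(ω)|² ≥ 2n²`. -/
theorem stmt_9 :
    ∀ᵐ ω ∂(volume.restrict (Set.Icc (0:ℝ) 1)),
      {n : ℕ | 1 ≤ n ∧
        2 * (n : ℝ) ^ 2 ≤ ∑ m ∈ Finset.Icc 1 n, ‖S ω m‖ ^ 2}.Infinite := by
  refine ae_restrict_of_ae ?_
  have hr : Filter.Tendsto (fun q : ℕ => 6 / (q : ℝ) ^ 2) Filter.atTop (nhds 0) :=
    Filter.Tendsto.div_atTop tendsto_const_nhds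
      ((Filter.tendsto_pow_atTop (by norm_num)).comp tendsto_natCast_atTop_atTop)
  have key := blimsup_cthickening_mul_ae_eq (volume : Measure ℝ) (fun q : ℕ => Odd q) fr
    (M := 1 / 12000000) (by norm_num) _ hr
  have hirr : ∀ᵐ ω : ℝ, ω ∉ Set.range ((↑) : ℚ → ℝ) :=
    (Set.countable_range _).ae_notMem _
  rw [← Nat.cofinite_eq_atTop, Filter.cofinite.blimsup_set_eq, Filter.cofinite.blimsup_set_eq] at key
  filter_upwards [key.mem_iff, hirr] with ω hω hi
  have hbig : {q : ℕ | Odd q ∧ ω ∈ Metric.cthickening (6 / (q : ℝ) ^ 2) (fr q)}.Infinite := by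
    rw [Set.infinite_iff_exists_gt]
    intro N
    obtain ⟨ξ, h1, h2⟩ := den_unbounded ω hi N
    obtain ⟨s, r, h3, h4, h5, h6⟩ := odd_approx ξ ω h1
    refine ⟨s, ⟨h4, ?_⟩, by omega⟩
    exact Metric.mem_cthickening_of_dist_le _ ((r : ℝ) / s) _ _ ⟨r, h5, rfl⟩ h6
  have hsmall := hω.2 hbig
  refine (hsmall.image (f := fun q => 128 * q) (fun a _ b _ h => by
    simpa using h)).mono ?_
  rintro _ ⟨q, ⟨hq, hmem⟩, rfl⟩
  have hq0 : 0 < q := hq.pos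
  have hqR : (0 : ℝ) < q := by exact_mod_cast hq0
  have h7 := Metric.cthickening_subset_thickening' (δ₂ := 1 / 1000000 / (q : ℝ) ^ 2)
    (by positivity) (by
      rw [← mul_div_assoc]; gcongr; norm_num) _ hmem
  rw [Metric.mem_thickening_iff] at h7
  obtain ⟨_, ⟨p, hp, rfl⟩, hd⟩ := h7
  exact ⟨by show 1 ≤ 128 * q; omega, main_est ω q p hq hp hd.le⟩
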